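/- arXiv:2404.06428 — 3 statements merged into one kernel-verified Lean document; each statement's English description precedes it below -/
import Mathlib

section
/- Let (M,D) be a metric space whose metric D is intrinsic, and let (C_n)_{n≥1} be a sequence of compact subsets of M with C_n ⊆ C_{n+1} and ⋃_{n≥1} C_n = M, such that for every n ≥ 2 the quantity ε_n := D(C_{n-1}, M∖int(C_n)) is strictly positive. Let f : M → (0,∞) be a continuous function with f(x) ≥ 1/ε_n for all x ∈ C_n∖C_{n-1} and all n ≥ 2. Then for every n ≥ 2, every x ∈ C_1 and every y ∈ M∖C_n, the weighted metric satisfies D̂_f(x,y) ≥ n − 1. -/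
open scoped ENNReal

/-- The length of a curve `c : [a, b] → M` measured with a generalized
(extended-real-valued) distance function `ρ`: the supremum, over all partitions
`a = t 0 ≤ t 1 ≤ … ≤ t n = b`, of `∑ ρ (c (t i)) (c (t (i+1)))`. -/
noncomputable def lengthWith {M : Type*} (ρ : M → M → ℝ≥0∞)
    (c : ℝ → M) (a b : ℝ) : ℝ≥0∞ :=
  ⨆ (n : ℕ) (t : Fin (n + 1) → ℝ) (_ : Monotone t) (_ : t 0 = a)
    (_ : t (Fin.last n) = b),
    ∑ i : Fin n, ρ (c (t i.castSucc)) (c (t i.succ))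

/-- The infimum of the `ρ`-lengths of continuous curves from `x` to `y`. -/
noncomputable def pathDistWith {M : Type*} [MetricSpace M] (ρ : M → M → ℝ≥0∞)
    (x y : M) : ℝ≥0∞ :=
  ⨅ (a : ℝ) (b : ℝ) (c : ℝ → M) (_ : a ≤ b) (_ : ContinuousOn c (Set.Icc a b))
    (_ : c a = x) (_ : c b = y), lengthWith ρ c a b

/-- A (generalized) distance function `ρ` on a metric space is intrinsic iff the
distance of any two points is the infimum of the `ρ`-lengths of the continuous
curves joining them. -/
def IsIntrinsic {M : Type*} [MetricSpace M] (ρ : M → M → ℝ≥0∞) : Prop :=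
  ∀ x y, ρ x y = pathDistWith ρ x y

/-- The weighted metric `D̂_f(x,y)`: the infimum of the `f`-weighted lengths
`ℓ̃_f(c)` over all continuous curves `c` from `x` to `y`. -/
noncomputable def hatDist {M : Type*} [MetricSpace M] (f : M → ℝ) (x y : M) : ℝ≥0∞ :=
  pathDistWith (fun p q : M => ENNReal.ofReal (f p) * edist p q) x y

/-- The distance between two subsets of a metric space, as an extended real
(so that `inf ∅ = ∞`). -/
noncomputable def setEDist {M : Type*} [MetricSpace M] (A B : Set M) : ℝ≥0∞ :=
  ⨅ (x ∈ A) (y ∈ B), edist x y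

/-! Cut a curve from `C 0` to the complement of the interior of `C n` at its last exits from the
closures of `C 0, …, C (n - 1)`. Lengths of consecutive arcs add up, so it is enough that each of
the `n` arcs following a cut has weighted length at least `1`. The arc starting on the closure of
`C k` ends outside the interior of `C (k + 1)`, so its chord has length at least `ε_{k+1}`. The
weight at the exit point itself is not controlled, but points of the arc just past it lie in
`C (k + 1) \ C k`, where the weight is at least `1 / ε_{k+1}`; let them tend to the exit point. -/

open Set Filter Topology

section Exit

variable {α X : Type*} [LinearOrder α] [DenselyOrdered α] [TopologicalSpace α] [OrderTopology α]
  [TopologicalSpace X] {c : α → X} {K : Set X} {a b : α}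

theorem notMem_interior_of_forall_Ioc_notMem (hab : a < b) (hc : ContinuousOn c (Icc a b))
    (hout : ∀ t ∈ Ioc a b, c t ∉ K) : c a ∉ interior K := by
  intro ha
  have hlim : Tendsto c (𝓝[>] a) (𝓝 (c a)) :=
    (hc a (left_mem_Icc.2 hab.le)).mono_of_mem_nhdsWithin (Icc_mem_nhdsGT hab)
  have := nhdsGT_neBot_of_exists_gt ⟨b, hab⟩
  obtain ⟨t, htK, ht⟩ :=
    ((hlim.eventually_mem (isOpen_interior.mem_nhds ha)).and (Ioc_mem_nhdsGT hab)).exists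
  exact hout t ht (interior_subset htK)

theorem exists_last_exit_of_isClosed [CompactIccSpace α] (hK : IsClosed K) (hab : a ≤ b)
    (hc : ContinuousOn c (Icc a b)) (ha : c a ∈ K) (hb : c b ∉ K) :
    ∃ s ∈ Ico a b, c s ∈ frontier K ∧ ∀ t ∈ Ioc s b, c t ∉ K := by
  have hcompact : IsCompact (Icc a b ∩ c ⁻¹' K) :=
    isCompact_Icc.of_isClosed_subset (hc.preimage_isClosed_of_isClosed isClosed_Icc hK)
      inter_subset_left
  obtain ⟨s, ⟨⟨has, hsb⟩, hsK⟩, hmax⟩ :=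
    hcompact.exists_isGreatest ⟨a, left_mem_Icc.2 hab, ha⟩
  have hsb' : s < b := hsb.lt_of_ne fun h => hb (h ▸ hsK)
  have hout : ∀ t ∈ Ioc s b, c t ∉ K := fun t ht htK =>
    (hmax ⟨⟨has.trans ht.1.le, ht.2⟩, htK⟩).not_gt ht.1
  have hsint : c s ∉ interior K :=
    notMem_interior_of_forall_Ioc_notMem hsb' (hc.mono (Icc_subset_Icc_left has)) hout
  exact ⟨s, ⟨has, hsb'⟩, hK.frontier_eq ▸ ⟨hsK, hsint⟩, hout⟩

end Exit

section Length

variable {M : Type*} {ρ : M → M → ℝ≥0∞} {c : ℝ → M} {a b d : ℝ} {σ τ : ℝ≥0∞}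

/-- The set of partition sums of the curve `c` on `[a, b]`, whose supremum is its length. Having
them as one set, empty only if `b < a`, makes sums of lengths suprema over nonempty sets. -/
def partitionSums (ρ : M → M → ℝ≥0∞) (c : ℝ → M) (a b : ℝ) : Set ℝ≥0∞ :=
  {σ | ∃ (n : ℕ) (t : Fin (n + 1) → ℝ), Monotone t ∧ t 0 = a ∧ t (Fin.last n) = b ∧
    ∑ i : Fin n, ρ (c (t i.castSucc)) (c (t i.succ)) = σ}

theorem lengthWith_eq_sSup_partitionSums : lengthWith ρ c a b = sSup (partitionSums ρ c a b) := by
  refine le_antisymm ?_ (sSup_le ?_)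
  · simp only [lengthWith, iSup_le_iff]
    exact fun n t ht h0 hlast => le_sSup ⟨n, t, ht, h0, hlast, rfl⟩
  · rintro _ ⟨n, t, ht, h0, hlast, rfl⟩
    exact le_iSup_of_le n <| le_iSup_of_le t <| le_iSup_of_le ht <| le_iSup_of_le h0 <|
      le_iSup_of_le hlast le_rfl

theorem zero_mem_partitionSums_self : 0 ∈ partitionSums ρ c a a :=
  ⟨0, fun _ => a, monotone_const, rfl, rfl, Fin.sum_univ_zero _⟩

theorem add_chord_mem_partitionSums (hσ : σ ∈ partitionSums ρ c a b) (hbd : b ≤ d) :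
    σ + ρ (c b) (c d) ∈ partitionSums ρ c a d := by
  obtain ⟨n, t, ht, rfl, rfl, rfl⟩ := hσ
  refine ⟨n + 1, Fin.snoc t d, ?_, Fin.snoc_castSucc (i := 0) .., Fin.snoc_last .., ?_⟩
  · refine Fin.monotone_iff_le_succ.2 (Fin.lastCases ?_ fun i => ?_)
    · simpa only [Fin.snoc_castSucc, Fin.succ_last, Fin.snoc_last] using hbd
    · simpa only [Fin.succ_castSucc, Fin.snoc_castSucc] using ht i.castSucc_le_succ
  · simp only [Fin.sum_univ_castSucc, Fin.succ_castSucc, Fin.snoc_castSucc, Fin.succ_last,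
      Fin.snoc_last]

theorem partitionSums_nonempty (hab : a ≤ b) : (partitionSums ρ c a b).Nonempty :=
  ⟨_, add_chord_mem_partitionSums zero_mem_partitionSums_self hab⟩

theorem add_mem_partitionSums (hσ : σ ∈ partitionSums ρ c a b) (hτ : τ ∈ partitionSums ρ c b d) :
    σ + τ ∈ partitionSums ρ c a d := by
  obtain ⟨n, t, ht, rfl, rfl, rfl⟩ := hτ
  induction n with
  | zero => simpa only [Fin.sum_univ_zero, add_zero, Fin.last_zero] using hσ
  | succ n ih =>
    have hinit := ih (fun i => t i.castSucc) (ht.comp Fin.strictMono_castSucc.monotone) hσ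
    rw [Fin.sum_univ_castSucc, ← add_assoc]
    exact add_chord_mem_partitionSums hinit (ht (Fin.last n).castSucc_le_succ)

theorem lengthWith_add_lengthWith_le (hab : a ≤ b) (hbd : b ≤ d) :
    lengthWith ρ c a b + lengthWith ρ c b d ≤ lengthWith ρ c a d := by
  simp only [lengthWith_eq_sSup_partitionSums, sSup_eq_iSup (s := partitionSums ρ c a b),
    sSup_eq_iSup (s := partitionSums ρ c b d)]
  exact ENNReal.biSup_add_biSup_le (partitionSums_nonempty hab) (partitionSums_nonempty hbd)
    fun _ hσ _ hτ => le_sSup (add_mem_partitionSums hσ hτ)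

theorem le_lengthWith (hab : a ≤ b) (hbd : b ≤ d) : ρ (c b) (c d) ≤ lengthWith ρ c a d := by
  obtain ⟨σ, hσ⟩ := partitionSums_nonempty (ρ := ρ) (c := c) hab
  rw [lengthWith_eq_sSup_partitionSums]
  exact le_add_self.trans (le_sSup (add_chord_mem_partitionSums hσ hbd))

end Length

section Metric

variable {M : Type*} [MetricSpace M]

theorem setEDist_le_edist_of_mem_closure {A B : Set M} {x y : M} (hx : x ∈ closure A)
    (hy : y ∈ B) : setEDist A B ≤ edist x y :=
  closure_minimal (t := {z | setEDist A B ≤ edist z y})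
    (fun z hz => mem_ofPred.2 (iInf₂_le_of_le z hz (iInf₂_le y hy)))
    (isClosed_le continuous_const (continuous_id.edist continuous_const)) hx

theorem closure_subset_interior_of_setEDist_pos {A B : Set M}
    (h : 0 < setEDist A (interior B)ᶜ) : closure A ⊆ interior B := by
  intro x hx
  by_contra hxB
  have hle : setEDist A (interior B)ᶜ ≤ edist x x := setEDist_le_edist_of_mem_closure hx hxB
  exact h.not_ge (hle.trans_eq (edist_self x))

/-- The distance on `M` weighted at its first argument. Its lengths are the weighted lengths `ℓ̃_w`;
`hatDist f` is `pathDistWith (weightedEDist w)` with `w x = ENNReal.ofReal (f x)`. -/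
noncomputable def weightedEDist (w : M → ℝ≥0∞) (p q : M) : ℝ≥0∞ :=
  w p * edist p q

theorem one_le_lengthWith_of_forall_Ioc_notMem {A B : Set M} {w : M → ℝ≥0∞} {c : ℝ → M} {a b : ℝ}
    (hpos : 0 < setEDist A (interior B)ᶜ)
    (hw : ∀ x ∈ B \ A, (setEDist A (interior B)ᶜ)⁻¹ ≤ w x)
    (hab : a < b) (hc : ContinuousOn c (Icc a b)) (ha : c a ∈ closure A)
    (hout : ∀ t ∈ Ioc a b, c t ∉ A) (hb : c b ∉ interior B) :
    1 ≤ lengthWith (weightedEDist w) c a b := by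
  set ε := setEDist A (interior B)ᶜ
  have hε : ε ≤ edist (c a) (c b) := setEDist_le_edist_of_mem_closure ha hb
  have hlim : Tendsto c (𝓝[>] a) (𝓝 (c a)) :=
    (hc a (left_mem_Icc.2 hab.le)).mono_of_mem_nhdsWithin (Icc_mem_nhdsGT hab)
  have hlim_chord :
      Tendsto (fun t => ε⁻¹ * edist (c t) (c b)) (𝓝[>] a) (𝓝 (ε⁻¹ * edist (c a) (c b))) :=
    ENNReal.Tendsto.const_mul (hlim.edist tendsto_const_nhds)
      (Or.inr (ENNReal.inv_ne_top.2 hpos.ne'))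
  have hchord : ∀ᶠ t in 𝓝[>] a,
      ε⁻¹ * edist (c t) (c b) ≤ lengthWith (weightedEDist w) c a b := by
    have hnear : interior B ∈ 𝓝 (c a) :=
      isOpen_interior.mem_nhds (closure_subset_interior_of_setEDist_pos hpos ha)
    filter_upwards [hlim.eventually_mem hnear, Ioc_mem_nhdsGT hab] with t htB ht
    calc ε⁻¹ * edist (c t) (c b)
        ≤ weightedEDist w (c t) (c b) := by
          unfold weightedEDist
          gcongr
          exact hw _ ⟨interior_subset htB, hout t ht⟩
      _ ≤ lengthWith (weightedEDist w) c a b := le_lengthWith ht.1.le ht.2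
  calc 1 = ε⁻¹ * ε :=
        (ENNReal.inv_mul_cancel hpos.ne' (hε.trans_lt (edist_lt_top _ _)).ne).symm
    _ ≤ ε⁻¹ * edist (c a) (c b) := by gcongr
    _ ≤ lengthWith (weightedEDist w) c a b := le_of_tendsto hlim_chord hchord

variable {C : ℕ → Set M} {w : M → ℝ≥0∞}

theorem natCast_le_lengthWith_of_exhaustion
    (hpos : ∀ n, 0 < setEDist (C n) (interior (C (n + 1)))ᶜ)
    (hw : ∀ n, ∀ x ∈ C (n + 1) \ C n, (setEDist (C n) (interior (C (n + 1)))ᶜ)⁻¹ ≤ w x)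
    {c : ℝ → M} {a b : ℝ} (hab : a ≤ b) (hc : ContinuousOn c (Icc a b)) (ha : c a ∈ C 0)
    {n : ℕ} (hb : c b ∉ interior (C n)) : n ≤ lengthWith (weightedEDist w) c a b := by
  have hsub (k : ℕ) : closure (C k) ⊆ interior (C (k + 1)) :=
    closure_subset_interior_of_setEDist_pos (hpos k)
  have hmono : Monotone C :=
    monotone_nat_of_le_succ fun k => subset_closure.trans ((hsub k).trans interior_subset)
  induction n generalizing b with
  | zero => simp only [Nat.cast_zero, zero_le]
  | succ n ih =>
    obtain ⟨s, ⟨has, hsb⟩, hs, hout⟩ := exists_last_exit_of_isClosed isClosed_closure hab hc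
      (subset_closure (hmono n.zero_le ha)) (fun h => hb (hsub n h))
    rw [isClosed_closure.frontier_eq] at hs
    have hbefore : n ≤ lengthWith (weightedEDist w) c a s :=
      ih has (hc.mono (Icc_subset_Icc_right hsb.le))
        (fun h => hs.2 (interior_mono subset_closure h))
    have hafter : 1 ≤ lengthWith (weightedEDist w) c s b :=
      one_le_lengthWith_of_forall_Ioc_notMem (hpos n) (hw n) hsb
        (hc.mono (Icc_subset_Icc_left has)) hs.1 (fun t ht h => hout t ht (subset_closure h)) hb
    calc ((n + 1 : ℕ) : ℝ≥0∞) = n + 1 := Nat.cast_succ n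
      _ ≤ lengthWith (weightedEDist w) c a s + lengthWith (weightedEDist w) c s b :=
        add_le_add hbefore hafter
      _ ≤ lengthWith (weightedEDist w) c a b := lengthWith_add_lengthWith_le has hsb.le

theorem hatDist_ge_of_exhaustion_general
    (hpos : ∀ n, 0 < setEDist (C n) (interior (C (n + 1)))ᶜ)
    (hw : ∀ n, ∀ x ∈ C (n + 1) \ C n, (setEDist (C n) (interior (C (n + 1)))ᶜ)⁻¹ ≤ w x)
    {n : ℕ} {x y : M} (hx : x ∈ C 0) (hy : y ∉ interior (C n)) :
    n ≤ pathDistWith (weightedEDist w) x y := by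
  simp only [pathDistWith, le_iInf_iff]
  rintro a b c hab hc rfl rfl
  exact natCast_le_lengthWith_of_exhaustion hpos hw hab hc hx hy

end Metric

/-- **Growth estimate in the proof of Theorem 2 of the paper.** Let `D` be
intrinsic, let `C 0 ⊆ C 1 ⊆ …` be a compact exhaustion (here `C n` plays the
role of `C_{n+1}` of the paper), for `n ≥ 1` let
`ε_n := D(C (n-1), M ∖ int (C n))` be strictly positive, and let `f > 0` be
continuous with `f ≥ 1/ε_n` on `C n ∖ C (n-1)`.  Then for every `n ≥ 1`,
every `x ∈ C 0` and every `y ∉ C n` we have `D̂_f(x,y) ≥ n`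
(i.e. `D̂(C_1, M ∖ C_n) ≥ n - 1` in the paper's numbering). -/
theorem hatDist_ge_of_exhaustion
    {M : Type*} [MetricSpace M]
    (hintr : IsIntrinsic (fun x y : M => edist x y))
    (C : ℕ → Set M)
    (hcomp : ∀ n, IsCompact (C n))
    (hmono : ∀ n, C n ⊆ C (n + 1))
    (hunion : ⋃ n, C n = Set.univ)
    (hpos : ∀ n : ℕ, 1 ≤ n → 0 < setEDist (C (n - 1)) ((interior (C n))ᶜ))
    (f : M → ℝ) (hf : Continuous f) (hfpos : ∀ x, 0 < f x)
    (hfbd : ∀ n : ℕ, 1 ≤ n → ∀ x ∈ C n \ C (n - 1),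
      (setEDist (C (n - 1)) ((interior (C n))ᶜ))⁻¹ ≤ ENNReal.ofReal (f x)) :
    ∀ n : ℕ, 1 ≤ n → ∀ x ∈ C 0, ∀ y ∉ C n, (n : ℝ≥0∞) ≤ hatDist f x y :=
  fun _ _ _ hx _ hy => hatDist_ge_of_exhaustion_general (fun k => hpos (k + 1) k.succ_pos)
    (fun k => hfbd (k + 1) k.succ_pos) hx (fun h => hy (interior_subset h))
end

section
/- Let X be a set, X₋, X₊ ⊆ X with X₋ ∪ X₊ = X, and S := X₋ ∩ X₊. Let ≤₋ be a reflexive and transitive relation on X₋ and ≤₊ a reflexive and transitive relation on X₊ such that: (a) for all x,y ∈ S, x ≤₋ y if and only if x ≤₊ y; (b) for all y ∈ S and z ∈ X₋, y ≤₋ z implies z ∈ S; (c) for all x ∈ X₊ and y ∈ S, x ≤₊ y implies x ∈ S. Define the glued relation ≤_X on X by: x ≤_X y iff (x,y ∈ X₋ and x ≤₋ y) or (x,y ∈ X₊ and x ≤₊ y) or (x ∈ X₋, y ∈ X₊ and there exists g ∈ S with x ≤₋ g and g ≤₊ y). Then ≤_X is reflexive and transitive on X. -/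
/-- The glued causal relation on `X = X₋ ∪ X₊`: `x ≤_X y` iff both points lie in
`X₋` and `x ≤₋ y`, or both lie in `X₊` and `x ≤₊ y`, or `x ∈ X₋`, `y ∈ X₊` and
there is `g ∈ S` with `x ≤₋ g` and `g ≤₊ y`. -/
def gluedLe {α : Type*} (Xm Xp S : Set α) (lem lep : α → α → Prop) (x y : α) : Prop :=
  (x ∈ Xm ∧ y ∈ Xm ∧ lem x y) ∨ (x ∈ Xp ∧ y ∈ Xp ∧ lep x y) ∨
    (x ∈ Xm ∧ y ∈ Xp ∧ ∃ g ∈ S, lem x g ∧ lep g y)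

/-!
The future of a point of `X₊` never leaves `X₊`: it can only cross into `X₋` through `S`, which is
future-closed in `X₋`, and there `≤₋` implies `≤₊`. So `≤_X` is just `≤₊` from points of `X₊` on,
and `x ≤_X y ≤_X z` falls into two cases. If `y ∈ X₊`, the second relation is a `≤₊`-step, which
can be appended to any `≤_X`-relation; otherwise the first is a `≤₋`-step, which can be prepended.
-/

namespace gluedLe

variable {α : Type*} {Xm Xp S : Set α} {lem lep : α → α → Prop} {x y z : α}

theorem refl (hreflm : ∀ x ∈ Xm, lem x x) (hreflp : ∀ x ∈ Xp, lep x x) (hx : x ∈ Xm ∪ Xp) :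
    gluedLe Xm Xp S lem lep x x :=
  hx.imp (fun hxm => ⟨hxm, hxm, hreflm x hxm⟩) (fun hxp => Or.inl ⟨hxp, hxp, hreflp x hxp⟩)

theorem mem_and_lem_of_notMem (hxy : gluedLe Xm Xp S lem lep x y) (hy : y ∉ Xp) :
    x ∈ Xm ∧ y ∈ Xm ∧ lem x y :=
  hxy.resolve_right fun h => hy (h.elim (fun hp => hp.2.1) (fun hmp => hmp.2.1))

theorem mem_and_lep_of_mem
    (htransp : ∀ x ∈ Xp, ∀ y ∈ Xp, ∀ z ∈ Xp, lep x y → lep y z → lep x z)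
    (ha : ∀ x ∈ Xm ∩ Xp, ∀ y ∈ Xm ∩ Xp, lem x y → lep x y)
    (hb : ∀ y ∈ Xm ∩ Xp, ∀ z ∈ Xm, lem y z → z ∈ Xp)
    (hxy : gluedLe Xm Xp (Xm ∩ Xp) lem lep x y) (hx : x ∈ Xp) :
    y ∈ Xp ∧ lep x y := by
  rcases hxy with ⟨hxm, hym, hle⟩ | ⟨-, hyp, hle⟩ | ⟨hxm, hyp, g, hg, hxg, hgy⟩
  · have hyp : y ∈ Xp := hb x ⟨hxm, hx⟩ y hym hle
    exact ⟨hyp, ha x ⟨hxm, hx⟩ y ⟨hym, hyp⟩ hle⟩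
  · exact ⟨hyp, hle⟩
  · have hxg' : lep x g := ha x ⟨hxm, hx⟩ g hg hxg
    exact ⟨hyp, htransp x hx g hg.2 y hyp hxg' hgy⟩

theorem trans_lep
    (htransp : ∀ x ∈ Xp, ∀ y ∈ Xp, ∀ z ∈ Xp, lep x y → lep y z → lep x z)
    (hxy : gluedLe Xm Xp (Xm ∩ Xp) lem lep x y) (hy : y ∈ Xp) (hz : z ∈ Xp) (hyz : lep y z) :
    gluedLe Xm Xp (Xm ∩ Xp) lem lep x z := by
  rcases hxy with ⟨hxm, hym, hle⟩ | ⟨hxp, -, hle⟩ | ⟨hxm, -, g, hg, hxg, hgy⟩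
  · exact Or.inr (Or.inr ⟨hxm, hz, y, ⟨hym, hy⟩, hle, hyz⟩)
  · exact Or.inr (Or.inl ⟨hxp, hz, htransp x hxp y hy z hz hle hyz⟩)
  · exact Or.inr (Or.inr ⟨hxm, hz, g, hg, hxg, htransp g hg.2 y hy z hz hgy hyz⟩)

theorem lem_trans
    (htransm : ∀ x ∈ Xm, ∀ y ∈ Xm, ∀ z ∈ Xm, lem x y → lem y z → lem x z)
    (hx : x ∈ Xm) (hy : y ∈ Xm) (hxy : lem x y) (hyz : gluedLe Xm Xp (Xm ∩ Xp) lem lep y z) :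
    gluedLe Xm Xp (Xm ∩ Xp) lem lep x z := by
  rcases hyz with ⟨-, hzm, hle⟩ | ⟨hyp, hzp, hle⟩ | ⟨-, hzp, g, hg, hyg, hgz⟩
  · exact Or.inl ⟨hx, hzm, htransm x hx y hy z hzm hxy hle⟩
  · exact Or.inr (Or.inr ⟨hx, hzp, y, ⟨hy, hyp⟩, hxy, hle⟩)
  · exact Or.inr (Or.inr ⟨hx, hzp, g, hg, htransm x hx y hy g hg.1 hxy hyg, hgz⟩)

theorem trans
    (htransm : ∀ x ∈ Xm, ∀ y ∈ Xm, ∀ z ∈ Xm, lem x y → lem y z → lem x z)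
    (htransp : ∀ x ∈ Xp, ∀ y ∈ Xp, ∀ z ∈ Xp, lep x y → lep y z → lep x z)
    (ha : ∀ x ∈ Xm ∩ Xp, ∀ y ∈ Xm ∩ Xp, lem x y → lep x y)
    (hb : ∀ y ∈ Xm ∩ Xp, ∀ z ∈ Xm, lem y z → z ∈ Xp)
    (hxy : gluedLe Xm Xp (Xm ∩ Xp) lem lep x y) (hyz : gluedLe Xm Xp (Xm ∩ Xp) lem lep y z) :
    gluedLe Xm Xp (Xm ∩ Xp) lem lep x z := by
  by_cases hy : y ∈ Xp
  · obtain ⟨hz, hle⟩ := hyz.mem_and_lep_of_mem htransp ha hb hy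
    exact hxy.trans_lep htransp hy hz hle
  · obtain ⟨hx, hym, hle⟩ := hxy.mem_and_lem_of_notMem hy
    exact lem_trans htransm hx hym hle hyz

end gluedLe

theorem gluedLe_refl_trans_general {α : Type*} (Xm Xp : Set α)
    (hcover : Xm ∪ Xp = Set.univ)
    (lem lep : α → α → Prop)
    (hreflm : ∀ x ∈ Xm, lem x x)
    (htransm : ∀ x ∈ Xm, ∀ y ∈ Xm, ∀ z ∈ Xm, lem x y → lem y z → lem x z)
    (hreflp : ∀ x ∈ Xp, lep x x)
    (htransp : ∀ x ∈ Xp, ∀ y ∈ Xp, ∀ z ∈ Xp, lep x y → lep y z → lep x z)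
    (ha : ∀ x ∈ Xm ∩ Xp, ∀ y ∈ Xm ∩ Xp, lem x y → lep x y)
    (hb : ∀ y ∈ Xm ∩ Xp, ∀ z ∈ Xm, lem y z → z ∈ Xp) :
    (∀ x : α, gluedLe Xm Xp (Xm ∩ Xp) lem lep x x) ∧
      (∀ x y z : α, gluedLe Xm Xp (Xm ∩ Xp) lem lep x y →
        gluedLe Xm Xp (Xm ∩ Xp) lem lep y z →
        gluedLe Xm Xp (Xm ∩ Xp) lem lep x z) :=
  ⟨fun x => gluedLe.refl hreflm hreflp (hcover ▸ Set.mem_univ x),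
    fun _ _ _ => gluedLe.trans htransm htransp ha hb⟩

/-- **Order-theoretic core of Theorem 6 of the paper.** Gluing two preordered
pieces `X₋`, `X₊` covering `X` along `S = X₋ ∩ X₊`, where the two relations
agree on `S`, `S` is future-closed in `X₋` and past-closed in `X₊`, yields a
reflexive and transitive glued relation on `X`. -/
theorem gluedLe_refl_trans {α : Type*} (Xm Xp : Set α)
    (hcover : Xm ∪ Xp = Set.univ)
    (lem lep : α → α → Prop)
    (hreflm : ∀ x ∈ Xm, lem x x)
    (htransm : ∀ x ∈ Xm, ∀ y ∈ Xm, ∀ z ∈ Xm, lem x y → lem y z → lem x z)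
    (hreflp : ∀ x ∈ Xp, lep x x)
    (htransp : ∀ x ∈ Xp, ∀ y ∈ Xp, ∀ z ∈ Xp, lep x y → lep y z → lep x z)
    -- (a) the two relations agree on `S = X₋ ∩ X₊`
    (ha : ∀ x ∈ Xm ∩ Xp, ∀ y ∈ Xm ∩ Xp, (lem x y ↔ lep x y))
    -- (b) anything in `X₋` above a point of `S` lies in `S`
    (hb : ∀ y ∈ Xm ∩ Xp, ∀ z ∈ Xm, lem y z → z ∈ Xm ∩ Xp)
    -- (c) anything in `X₊` below a point of `S` lies in `S`
    (hc : ∀ x ∈ Xp, ∀ y ∈ Xm ∩ Xp, lep x y → x ∈ Xm ∩ Xp) :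
    (∀ x : α, gluedLe Xm Xp (Xm ∩ Xp) lem lep x x) ∧
      (∀ x y z : α, gluedLe Xm Xp (Xm ∩ Xp) lem lep x y →
        gluedLe Xm Xp (Xm ∩ Xp) lem lep y z →
        gluedLe Xm Xp (Xm ∩ Xp) lem lep x z) := by
  exact gluedLe_refl_trans_general Xm Xp hcover lem lep hreflm htransm hreflp htransp
    (fun x hx y hy => (ha x hx y hy).1) (fun y hy z hz hyz => (hb y hy z hz hyz).2)
end

section
/- Let X be a set, X₋, X₊ ⊆ X with X₋ ∪ X₊ = X, and S := X₋ ∩ X₊, with relations ≤₋ on X₋ and ≤₊ on X₊ that are reflexive and transitive, agree on S × S, and satisfy: for all y ∈ S and z ∈ X₋, y ≤₋ z implies z ∈ S; and for all x ∈ X₊ and y ∈ S, x ≤₊ y implies x ∈ S. Let ≤_X be the glued relation (x ≤_X y iff x,y ∈ X₋ and x ≤₋ y, or x,y ∈ X₊ and x ≤₊ y, or x ∈ X₋, y ∈ X₊ and there exists g ∈ S with x ≤₋ g and g ≤₊ y). Let τ₋ : X₋ × X₋ → [0,∞] and τ₊ : X₊ × X₊ → [0,∞] agree on S × S and each satisfy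 the reverse triangle inequality with respect to ≤₋ resp. ≤₊ (i.e., τ(x,z) ≥ τ(x,y) + τ(y,z) whenever x ≤ y ≤ z). Define τ : X × X → [0,∞] by: τ(p,q) := τ₋(p,q) if p,q ∈ X₋; τ(p,q) := τ₊(p,q) if p,q ∈ X₊; τ(p,q) := sup{τ₋(p,g) + τ₊(g,q) : g ∈ S, p ≤₋ g, g ≤₊ q} (with sup over the empty set equal to 0) if p ∈ X₋∖S and q ∈ X₊∖S; and τ(p,q) := 0 if p ∈ X₊∖S and q ∈ X₋∖S. Then τ satisfies the reverse triangle inequality with respect to ≤_X: for all x,y,z ∈ X with x ≤_X y ≤_X z one has τ(x,z) ≥ τ(x,y) + τ(y,z). Moreover, if additionally τ₋(p,q) > 0 implies p ≤₋ q and τ₊(p,q) > 0 implies p ≤₊ q, then τ(p,q) > 0 implies p ≤_X q. -/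
open scoped ENNReal

open Classical in
/-- The glued time-separation function: `τ₋` on `X₋ × X₋`, `τ₊` on `X₊ × X₊`,
`sup { τ₋(p,g) + τ₊(g,q) : g ∈ S, p ≤₋ g ≤₊ q }` for `p ∈ X₋ ∖ S`,
`q ∈ X₊ ∖ S` (with `sup ∅ = 0`), and `0` for `p ∈ X₊ ∖ S`, `q ∈ X₋ ∖ S`. -/
noncomputable def gluedTau {α : Type*} (Xm Xp S : Set α) (lem lep : α → α → Prop)
    (τm τp : α → α → ℝ≥0∞) (p q : α) : ℝ≥0∞ :=
  if p ∈ Xm ∧ q ∈ Xm then τm p q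
  else if p ∈ Xp ∧ q ∈ Xp then τp p q
  else if p ∈ Xm ∧ q ∈ Xp then
    ⨆ (g : α) (_ : g ∈ S) (_ : lem p g) (_ : lep g q), τm p g + τp g q
  else 0

/-!
A causal step `x ≤_X y` lies in one of the pieces unless it leads from `X₋ ∖ S` to `X₊ ∖ S`, and
then it crosses `S`. Two consecutive steps contain at most one crossing, since a step out of
`X₊ ∖ S` stays in `X₊`. If neither step crosses and they lead from `X₋` to `X₊`, the middle point
belongs to `S` and competes in the supremum defining `τ(x, z)`. If one step crosses, say
`y ≤₋ g ≤₊ z`, the reverse triangle inequality in the piece containing the other step gives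
`τ₋(x, y) + τ₋(y, g) + τ₊(g, z) ≤ τ₋(x, g) + τ₊(g, z)`, and one takes the supremum over `g`. A
passage from `X₊ ∖ S` through `S` into `X₋ ∖ S`, where `τ` vanishes, cannot occur because `S` is a
causal boundary.
-/

/-- The points of `S` through which `x` precedes `y` in the glued space: the index set of the
supremum defining the time separation across the gluing boundary. -/
def crossingSet {α : Type*} (S : Set α) (lem lep : α → α → Prop) (x y : α) : Set α :=
  {g ∈ S | lem x g ∧ lep g y}

section Gluing

variable {α : Type*} {Xm Xp S : Set α} {lem lep : α → α → Prop} {τm τp : α → α → ℝ≥0∞}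
  {x y z g : α}

theorem gluedLe_cases
    (htransm : ∀ x ∈ Xm, ∀ y ∈ Xm, ∀ z ∈ Xm, lem x y → lem y z → lem x z)
    (htransp : ∀ x ∈ Xp, ∀ y ∈ Xp, ∀ z ∈ Xp, lep x y → lep y z → lep x z)
    (hle : ∀ x ∈ Xm ∩ Xp, ∀ y ∈ Xm ∩ Xp, (lem x y ↔ lep x y))
    (h : gluedLe Xm Xp (Xm ∩ Xp) lem lep x y) :
    (x ∈ Xm ∧ y ∈ Xm ∧ lem x y) ∨ (x ∈ Xp ∧ y ∈ Xp ∧ lep x y) ∨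
      (x ∈ Xm \ Xp ∧ y ∈ Xp \ Xm ∧ (crossingSet (Xm ∩ Xp) lem lep x y).Nonempty) := by
  rcases h with h | h | ⟨hx, hy, g, hg, hxg, hgy⟩
  · exact .inl h
  · exact .inr (.inl h)
  by_cases hy' : y ∈ Xm
  · have hgy' : lem g y := (hle g hg y ⟨hy', hy⟩).2 hgy
    exact .inl ⟨hx, hy', htransm x hx g hg.1 y hy' hxg hgy'⟩
  by_cases hx' : x ∈ Xp
  · have hxg' : lep x g := (hle x ⟨hx, hx'⟩ g hg).1 hxg
    exact .inr (.inl ⟨hx', hy, htransp x hx' g hg.2 y hy hxg' hgy⟩)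
  exact .inr (.inr ⟨⟨hx, hx'⟩, ⟨hy, hy'⟩, g, hg, hxg, hgy⟩)

theorem gluedTau_of_mem_left (hx : x ∈ Xm) (hy : y ∈ Xm) :
    gluedTau Xm Xp S lem lep τm τp x y = τm x y :=
  if_pos ⟨hx, hy⟩

theorem gluedTau_of_mem_right (hτ : ∀ x ∈ Xm ∩ Xp, ∀ y ∈ Xm ∩ Xp, τm x y = τp x y)
    (hx : x ∈ Xp) (hy : y ∈ Xp) : gluedTau Xm Xp S lem lep τm τp x y = τp x y := by
  by_cases h : x ∈ Xm ∧ y ∈ Xm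
  · rw [gluedTau_of_mem_left h.1 h.2, hτ x ⟨h.1, hx⟩ y ⟨h.2, hy⟩]
  · rw [gluedTau, if_neg h, if_pos ⟨hx, hy⟩]

theorem gluedTau_of_mem_diff (hx : x ∈ Xm \ Xp) (hy : y ∈ Xp \ Xm) :
    gluedTau Xm Xp S lem lep τm τp x y = ⨆ g ∈ crossingSet S lem lep x y, τm x g + τp g y := by
  rw [gluedTau, if_neg fun h => hy.2 h.2, if_neg fun h => hx.2 h.1, if_pos ⟨hx.1, hy.1⟩]
  simp only [crossingSet, Set.mem_sep_iff, iSup_and]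

theorem gluedLe_of_gluedTau_pos (hm : ∀ p ∈ Xm, ∀ q ∈ Xm, 0 < τm p q → lem p q)
    (hp : ∀ p ∈ Xp, ∀ q ∈ Xp, 0 < τp p q → lep p q)
    (hpos : 0 < gluedTau Xm Xp S lem lep τm τp x y) : gluedLe Xm Xp S lem lep x y := by
  unfold gluedTau at hpos
  split_ifs at hpos with hxy hxy hxy
  · exact .inl ⟨hxy.1, hxy.2, hm x hxy.1 y hxy.2 hpos⟩
  · exact .inr (.inl ⟨hxy.1, hxy.2, hp x hxy.1 y hxy.2 hpos⟩)
  · simp only [lt_iSup_iff] at hpos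
    obtain ⟨g, hg, hxg, hgy, -⟩ := hpos
    exact .inr (.inr ⟨hxy.1, hxy.2, g, hg, hxg, hgy⟩)
  · exact absurd hpos (lt_irrefl 0)

theorem add_le_gluedTau_of_mem_crossingSet
    (hle : ∀ x ∈ Xm ∩ Xp, ∀ y ∈ Xm ∩ Xp, (lem x y ↔ lep x y))
    (hτ : ∀ x ∈ Xm ∩ Xp, ∀ y ∈ Xm ∩ Xp, τm x y = τp x y)
    (hτm : ∀ x ∈ Xm, ∀ y ∈ Xm, ∀ z ∈ Xm, lem x y → lem y z → τm x y + τm y z ≤ τm x z)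
    (hτp : ∀ x ∈ Xp, ∀ y ∈ Xp, ∀ z ∈ Xp, lep x y → lep y z → τp x y + τp y z ≤ τp x z)
    (hx : x ∈ Xm) (hy : y ∈ Xp) (hg : g ∈ crossingSet (Xm ∩ Xp) lem lep x y) :
    τm x g + τp g y ≤ gluedTau Xm Xp (Xm ∩ Xp) lem lep τm τp x y := by
  obtain ⟨hgS, hxg, hgy⟩ := hg
  by_cases hy' : y ∈ Xm
  · rw [gluedTau_of_mem_left hx hy', ← hτ g hgS y ⟨hy', hy⟩]
    exact hτm x hx g hgS.1 y hy' hxg ((hle g hgS y ⟨hy', hy⟩).2 hgy)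
  by_cases hx' : x ∈ Xp
  · rw [gluedTau_of_mem_right hτ hx' hy, hτ x ⟨hx, hx'⟩ g hgS]
    exact hτp x hx' g hgS.2 y hy ((hle x ⟨hx, hx'⟩ g hgS).1 hxg) hgy
  rw [gluedTau_of_mem_diff ⟨hx, hx'⟩ ⟨hy, hy'⟩]
  exact le_iSup₂_of_le g ⟨hgS, hxg, hgy⟩ le_rfl

theorem gluedTau_add_le_of_left
    (hτm : ∀ x ∈ Xm, ∀ y ∈ Xm, ∀ z ∈ Xm, lem x y → lem y z → τm x y + τm y z ≤ τm x z)
    (hx : x ∈ Xm) (hy : y ∈ Xm) (hz : z ∈ Xm) (hxy : lem x y) (hyz : lem y z) :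
    gluedTau Xm Xp S lem lep τm τp x y + gluedTau Xm Xp S lem lep τm τp y z ≤
      gluedTau Xm Xp S lem lep τm τp x z := by
  rw [gluedTau_of_mem_left hx hy, gluedTau_of_mem_left hy hz, gluedTau_of_mem_left hx hz]
  exact hτm x hx y hy z hz hxy hyz

theorem gluedTau_add_le_of_right (hτ : ∀ x ∈ Xm ∩ Xp, ∀ y ∈ Xm ∩ Xp, τm x y = τp x y)
    (hτp : ∀ x ∈ Xp, ∀ y ∈ Xp, ∀ z ∈ Xp, lep x y → lep y z → τp x y + τp y z ≤ τp x z)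
    (hx : x ∈ Xp) (hy : y ∈ Xp) (hz : z ∈ Xp) (hxy : lep x y) (hyz : lep y z) :
    gluedTau Xm Xp S lem lep τm τp x y + gluedTau Xm Xp S lem lep τm τp y z ≤
      gluedTau Xm Xp S lem lep τm τp x z := by
  rw [gluedTau_of_mem_right hτ hx hy, gluedTau_of_mem_right hτ hy hz,
    gluedTau_of_mem_right hτ hx hz]
  exact hτp x hx y hy z hz hxy hyz

theorem gluedTau_add_le_of_left_of_right
    (hle : ∀ x ∈ Xm ∩ Xp, ∀ y ∈ Xm ∩ Xp, (lem x y ↔ lep x y))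
    (hτ : ∀ x ∈ Xm ∩ Xp, ∀ y ∈ Xm ∩ Xp, τm x y = τp x y)
    (hτm : ∀ x ∈ Xm, ∀ y ∈ Xm, ∀ z ∈ Xm, lem x y → lem y z → τm x y + τm y z ≤ τm x z)
    (hτp : ∀ x ∈ Xp, ∀ y ∈ Xp, ∀ z ∈ Xp, lep x y → lep y z → τp x y + τp y z ≤ τp x z)
    (hx : x ∈ Xm) (hy : y ∈ Xm ∩ Xp) (hz : z ∈ Xp) (hxy : lem x y) (hyz : lep y z) :
    gluedTau Xm Xp (Xm ∩ Xp) lem lep τm τp x y + gluedTau Xm Xp (Xm ∩ Xp) lem lep τm τp y z ≤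
      gluedTau Xm Xp (Xm ∩ Xp) lem lep τm τp x z := by
  rw [gluedTau_of_mem_left hx hy.1, gluedTau_of_mem_right hτ hy.2 hz]
  exact add_le_gluedTau_of_mem_crossingSet hle hτ hτm hτp hx hz ⟨hy, hxy, hyz⟩

theorem gluedTau_add_le_of_left_of_crossing
    (htransm : ∀ x ∈ Xm, ∀ y ∈ Xm, ∀ z ∈ Xm, lem x y → lem y z → lem x z)
    (hle : ∀ x ∈ Xm ∩ Xp, ∀ y ∈ Xm ∩ Xp, (lem x y ↔ lep x y))
    (hτ : ∀ x ∈ Xm ∩ Xp, ∀ y ∈ Xm ∩ Xp, τm x y = τp x y)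
    (hτm : ∀ x ∈ Xm, ∀ y ∈ Xm, ∀ z ∈ Xm, lem x y → lem y z → τm x y + τm y z ≤ τm x z)
    (hτp : ∀ x ∈ Xp, ∀ y ∈ Xp, ∀ z ∈ Xp, lep x y → lep y z → τp x y + τp y z ≤ τp x z)
    (hx : x ∈ Xm) (hy : y ∈ Xm \ Xp) (hz : z ∈ Xp \ Xm) (hxy : lem x y)
    (hyz : (crossingSet (Xm ∩ Xp) lem lep y z).Nonempty) :
    gluedTau Xm Xp (Xm ∩ Xp) lem lep τm τp x y + gluedTau Xm Xp (Xm ∩ Xp) lem lep τm τp y z ≤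
      gluedTau Xm Xp (Xm ∩ Xp) lem lep τm τp x z := by
  rw [gluedTau_of_mem_left hx hy.1, gluedTau_of_mem_diff hy hz, ENNReal.add_biSup hyz]
  refine iSup₂_le fun g ⟨hg, hyg, hgz⟩ => ?_
  have hxg : lem x g := htransm x hx y hy.1 g hg.1 hxy hyg
  calc τm x y + (τm y g + τp g z)
      = τm x y + τm y g + τp g z := (add_assoc _ _ _).symm
    _ ≤ τm x g + τp g z := by gcongr; exact hτm x hx y hy.1 g hg.1 hxy hyg
    _ ≤ _ := add_le_gluedTau_of_mem_crossingSet hle hτ hτm hτp hx hz.1 ⟨hg, hxg, hgz⟩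

theorem gluedTau_add_le_of_crossing_of_right
    (htransp : ∀ x ∈ Xp, ∀ y ∈ Xp, ∀ z ∈ Xp, lep x y → lep y z → lep x z)
    (hle : ∀ x ∈ Xm ∩ Xp, ∀ y ∈ Xm ∩ Xp, (lem x y ↔ lep x y))
    (hτ : ∀ x ∈ Xm ∩ Xp, ∀ y ∈ Xm ∩ Xp, τm x y = τp x y)
    (hτm : ∀ x ∈ Xm, ∀ y ∈ Xm, ∀ z ∈ Xm, lem x y → lem y z → τm x y + τm y z ≤ τm x z)
    (hτp : ∀ x ∈ Xp, ∀ y ∈ Xp, ∀ z ∈ Xp, lep x y → lep y z → τp x y + τp y z ≤ τp x z)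
    (hx : x ∈ Xm \ Xp) (hy : y ∈ Xp \ Xm) (hz : z ∈ Xp)
    (hxy : (crossingSet (Xm ∩ Xp) lem lep x y).Nonempty) (hyz : lep y z) :
    gluedTau Xm Xp (Xm ∩ Xp) lem lep τm τp x y + gluedTau Xm Xp (Xm ∩ Xp) lem lep τm τp y z ≤
      gluedTau Xm Xp (Xm ∩ Xp) lem lep τm τp x z := by
  rw [gluedTau_of_mem_diff hx hy, gluedTau_of_mem_right hτ hy.1 hz, ENNReal.biSup_add hxy]
  refine iSup₂_le fun g ⟨hg, hxg, hgy⟩ => ?_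
  have hgz : lep g z := htransp g hg.2 y hy.1 z hz hgy hyz
  calc τm x g + τp g y + τp y z
      = τm x g + (τp g y + τp y z) := add_assoc _ _ _
    _ ≤ τm x g + τp g z := by gcongr; exact hτp g hg.2 y hy.1 z hz hgy hyz
    _ ≤ _ := add_le_gluedTau_of_mem_crossingSet hle hτ hτm hτp hx.1 hz ⟨hg, hxg, hgz⟩

theorem gluedTau_reverse_triangle_general
    (htransm : ∀ x ∈ Xm, ∀ y ∈ Xm, ∀ z ∈ Xm, lem x y → lem y z → lem x z)
    (htransp : ∀ x ∈ Xp, ∀ y ∈ Xp, ∀ z ∈ Xp, lep x y → lep y z → lep x z)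
    (hle : ∀ x ∈ Xm ∩ Xp, ∀ y ∈ Xm ∩ Xp, (lem x y ↔ lep x y))
    (hno_return : ∀ x ∈ Xp, ∀ y ∈ Xm ∩ Xp, ∀ z ∈ Xm, lep x y → lem y z → x ∈ Xm ∨ z ∈ Xp)
    (hτ : ∀ x ∈ Xm ∩ Xp, ∀ y ∈ Xm ∩ Xp, τm x y = τp x y)
    (hτm : ∀ x ∈ Xm, ∀ y ∈ Xm, ∀ z ∈ Xm, lem x y → lem y z → τm x y + τm y z ≤ τm x z)
    (hτp : ∀ x ∈ Xp, ∀ y ∈ Xp, ∀ z ∈ Xp, lep x y → lep y z → τp x y + τp y z ≤ τp x z) :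
    (∀ x y z : α, gluedLe Xm Xp (Xm ∩ Xp) lem lep x y →
      gluedLe Xm Xp (Xm ∩ Xp) lem lep y z →
      gluedTau Xm Xp (Xm ∩ Xp) lem lep τm τp x y
          + gluedTau Xm Xp (Xm ∩ Xp) lem lep τm τp y z
        ≤ gluedTau Xm Xp (Xm ∩ Xp) lem lep τm τp x z) ∧
      ((∀ p ∈ Xm, ∀ q ∈ Xm, 0 < τm p q → lem p q) →
        (∀ p ∈ Xp, ∀ q ∈ Xp, 0 < τp p q → lep p q) →
        ∀ p q : α, 0 < gluedTau Xm Xp (Xm ∩ Xp) lem lep τm τp p q →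
          gluedLe Xm Xp (Xm ∩ Xp) lem lep p q) := by
  refine ⟨fun x y z hxy hyz => ?_, fun hm hp p q => gluedLe_of_gluedTau_pos hm hp⟩
  rcases gluedLe_cases htransm htransp hle hxy with
      ⟨hx, hy, hxy⟩ | ⟨hx, hy, hxy⟩ | ⟨hx, hy, hxy⟩ <;>
    rcases gluedLe_cases htransm htransp hle hyz with
      ⟨hy', hz, hyz⟩ | ⟨hy', hz, hyz⟩ | ⟨hy', hz, hyz⟩
  · exact gluedTau_add_le_of_left hτm hx hy hz hxy hyz
  · exact gluedTau_add_le_of_left_of_right hle hτ hτm hτp hx ⟨hy, hy'⟩ hz hxy hyz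
  · exact gluedTau_add_le_of_left_of_crossing htransm hle hτ hτm hτp hx hy' hz hxy hyz
  · have hyS : y ∈ Xm ∩ Xp := ⟨hy', hy⟩
    rcases hno_return x hx y hyS z hz hxy hyz with hx' | hz'
    · exact gluedTau_add_le_of_left hτm hx' hy' hz ((hle x ⟨hx', hx⟩ y hyS).2 hxy) hyz
    · exact gluedTau_add_le_of_right hτ hτp hx hy hz' hxy ((hle y hyS z ⟨hz, hz'⟩).1 hyz)
  · exact gluedTau_add_le_of_right hτ hτp hx hy hz hxy hyz
  · exact absurd hy hy'.2
  · exact absurd hy' hy.2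
  · exact gluedTau_add_le_of_crossing_of_right htransp hle hτ hτm hτp hx hy hz hxy hyz
  · exact absurd hy'.1 hy.2

end Gluing

/-- **Core of the verification of P.1 and P.2 in the proof of Theorem 6 of the
paper.** The glued time-separation function of two pieces glued along a common
Cauchy boundary `S = X₋ ∩ X₊` satisfies the reverse triangle inequality with
respect to the glued causal relation; moreover, if in each piece positive time
separation implies causal relation, the same holds for the glued data. -/
theorem gluedTau_reverse_triangle {α : Type*} (Xm Xp : Set α)
    (hcover : Xm ∪ Xp = Set.univ)
    (lem lep : α → α → Prop)
    (hreflm : ∀ x ∈ Xm, lem x x)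
    (htransm : ∀ x ∈ Xm, ∀ y ∈ Xm, ∀ z ∈ Xm, lem x y → lem y z → lem x z)
    (hreflp : ∀ x ∈ Xp, lep x x)
    (htransp : ∀ x ∈ Xp, ∀ y ∈ Xp, ∀ z ∈ Xp, lep x y → lep y z → lep x z)
    -- the two causal relations agree on `S = X₋ ∩ X₊`
    (ha : ∀ x ∈ Xm ∩ Xp, ∀ y ∈ Xm ∩ Xp, (lem x y ↔ lep x y))
    -- anything in `X₋` above a point of `S` lies in `S`
    (hb : ∀ y ∈ Xm ∩ Xp, ∀ z ∈ Xm, lem y z → z ∈ Xm ∩ Xp)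
    -- anything in `X₊` below a point of `S` lies in `S`
    (hc : ∀ x ∈ Xp, ∀ y ∈ Xm ∩ Xp, lep x y → x ∈ Xm ∩ Xp)
    (τm τp : α → α → ℝ≥0∞)
    -- the two time-separation functions agree on `S = X₋ ∩ X₊`
    (hτagree : ∀ x ∈ Xm ∩ Xp, ∀ y ∈ Xm ∩ Xp, τm x y = τp x y)
    -- reverse triangle inequality in each piece
    (hτm : ∀ x ∈ Xm, ∀ y ∈ Xm, ∀ z ∈ Xm, lem x y → lem y z →
      τm x y + τm y z ≤ τm x z)
    (hτp : ∀ x ∈ Xp, ∀ y ∈ Xp, ∀ z ∈ Xp, lep x y → lep y z →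
      τp x y + τp y z ≤ τp x z) :
    -- the glued `τ` satisfies the reverse triangle inequality w.r.t. `≤_X`
    (∀ x y z : α, gluedLe Xm Xp (Xm ∩ Xp) lem lep x y →
      gluedLe Xm Xp (Xm ∩ Xp) lem lep y z →
      gluedTau Xm Xp (Xm ∩ Xp) lem lep τm τp x y
          + gluedTau Xm Xp (Xm ∩ Xp) lem lep τm τp y z
        ≤ gluedTau Xm Xp (Xm ∩ Xp) lem lep τm τp x z) ∧
      -- moreover, positivity of the glued `τ` implies the glued causal relation
      ((∀ p ∈ Xm, ∀ q ∈ Xm, 0 < τm p q → lem p q) →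
        (∀ p ∈ Xp, ∀ q ∈ Xp, 0 < τp p q → lep p q) →
        ∀ p q : α, 0 < gluedTau Xm Xp (Xm ∩ Xp) lem lep τm τp p q →
          gluedLe Xm Xp (Xm ∩ Xp) lem lep p q) :=
  gluedTau_reverse_triangle_general htransm htransp ha
    (fun x hx y hy _ _ hxy _ => .inl (hc x hx y hy hxy).1) hτagree hτm hτp
end
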